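/- (Two-variable interlace polynomial as a circuit-partition generating function) Let w be a double occurrence word on n ≥ 1 vertices and let ℓ : {1,…,n} → GF(2) be a loop assignment; let A = I(w) + diag(ℓ). For each subset S ⊆ {1,…,n} define the transition assignment t_S by t_S(v) = follow if v ∉ S, t_S(v) = reverse if v ∈ S and ℓ(v) = 1, and t_S(v) = cross if v ∈ S and ℓ(v) = 0. Then the identity Σ_{S⊆{1,…,n}} (x−1)^{|S|−ν(A_S)} (y−1)^{ν(A_S)} = Σ_{S⊆{1,…,n}} (x−1)^{|S|−|P_{t_S}|+1} (y−1)^{|P_{t_S}|−1} holds in ℤ[x,y], where A_S is the principal submatrix of A on the rows and columns indexed by S. (The left-hand side is the two-variable interlace polynomial q(H) of the looped graph H with adjacency matrix A.) -/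

import Mathlib

/-! The two sums agree term by term: for every transition assignment `t` with looped interlace
matrix `A_S` (rows and columns at the vertices where `t` does not follow the word), the
circuit-nullity formula `|P_t| = ν(A_S) + 1` holds.

To prove it, consider labellings `f` of the edges by GF(2) that are constant on the circuits of
`P_t`; they form a space of dimension `|P_t|`. At either occurrence of a vertex `v` such a labelling
jumps by the same amount `x(v)` (`jump_eq`), and `x(v) = 0` where `t` follows. Conversely, any
`x : {1,…,n} → GF(2)` is the jump of a labelling, unique up to an additive constant, since every
vertex is met twice (`exists_label`, `label_const`). Summing jumps from one occurrence `a` of `v` to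
the other one `b` counts the vertices interlaced with `v` once and all others an even number of
times, so `f(a) + f(b) = x(v) + (I(w) x)(v)` (`label_compare`). Hence `f` is constant on circuits
precisely when `x` vanishes outside `S` and `A_S x = 0` (`invariant_iff`), and the jump map identifies
circuit labellings modulo constants with `ker A_S` (`card_circuits`, `nullity_submatrix`).

Finally `|P_t|` is half of the number of dart orbits: reversal of darts conjugates `τ_t` to its
inverse, and no dart is fixed by the reversal or reversed by `τ_t`, so no orbit is its own reversal
(`not_sameCycle_reverse`, `orbitCount_eq_two_mul`). -/

open scoped Classical

/-- The GF(2)-nullity of a square matrix: number of columns minus rank. -/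
noncomputable def nullity {ι : Type*} [Fintype ι] (M : Matrix ι ι (ZMod 2)) : ℕ :=
  Fintype.card ι - M.rank

/-- The setoid on `α` whose classes are the orbits (cycles, including fixed points)
of a permutation. -/
def sameCycleSetoid {α : Type*} (π : Equiv.Perm α) : Setoid α :=
  ⟨π.SameCycle, ⟨fun x => Equiv.Perm.SameCycle.refl π x, fun h => h.symm, fun h h' => h.trans h'⟩⟩

/-- The number of orbits of a permutation (fixed points count as orbits). -/
noncomputable def orbitCount {α : Type*} (π : Equiv.Perm α) : ℕ :=
  Nat.card (Quotient (sameCycleSetoid π))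

/-- A double occurrence word on `n` vertices: a map from the `2n` cyclic positions to the
vertices in which every vertex occurs at exactly two positions. -/
def DoubleOccurrence {n : ℕ} (w : Fin (2 * n) → Fin n) : Prop :=
  ∀ v : Fin n, (Finset.univ.filter fun p => w p = v).card = 2

/-- Distinct vertices `u` and `v` are interlaced in `w` when the two occurrences of `v` lie
in different cyclic arcs determined by the two occurrences of `u`; cutting the cycle at
position `0`, this says that exactly one occurrence of `v` lies strictly between the two
occurrences of `u`. -/
def Interlaced {n : ℕ} (w : Fin (2 * n) → Fin n) (u v : Fin n) : Prop :=
  u ≠ v ∧ ∀ p q : Fin (2 * n), p < q → w p = u → w q = u →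
    (Finset.univ.filter fun r => p < r ∧ r < q ∧ w r = v).card = 1

/-- The interlace matrix of a double occurrence word: the `(u,v)` entry is `1` iff `u ≠ v`
and `u`, `v` are interlaced; the diagonal entries are `0`. -/
noncomputable def interlaceMatrix {n : ℕ} (w : Fin (2 * n) → Fin n) :
    Matrix (Fin n) (Fin n) (ZMod 2) :=
  Matrix.of fun u v => if Interlaced w u v then 1 else 0

/-- A transition at a vertex: follow the word, cross it consistently with its orientation,
or reverse orientation. -/
inductive Transition : Type
  | follow : Transition
  | cross : Transition
  | reverse : Transition
deriving DecidableEq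

/-- The matrix `I_t(w)`: delete the rows/columns of the vertices where `t` is `follow`,
and put diagonal entry `1` at the vertices where `t` is `reverse` (and `0` where `t` is
`cross`); off-diagonal entries record interlacement in `w`. -/
noncomputable def transMatrix {n : ℕ} (w : Fin (2 * n) → Fin n) (t : Fin n → Transition) :
    Matrix {v : Fin n // t v ≠ Transition.follow} {v : Fin n // t v ≠ Transition.follow}
      (ZMod 2) :=
  Matrix.of fun u v =>
    if u = v then (if t u.1 = Transition.reverse then 1 else 0)
    else if Interlaced w u.1 v.1 then 1 else 0

/-- The position `1` in `Fin (2n)`, for `n ≥ 1`. -/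
def pos1 {n : ℕ} (hn : 0 < n) : Fin (2 * n) := ⟨1, by omega⟩

/-- `τ` is the dart permutation determined by the transition assignment `t` on the double
occurrence word `w`: darts are pairs `(p, ε)` with `ε = true` the traversal of the edge
`e_p` from `w(p)` to `w(p+1)` and `ε = false` its reverse, and for each vertex `v`
occurring at positions `a` and `b` the images of the four darts arriving at `v` are as
prescribed by `t v`. -/
def IsDartPerm {n : ℕ} (hn : 0 < n) (w : Fin (2 * n) → Fin n) (t : Fin n → Transition)
    (τ : Equiv.Perm (Fin (2 * n) × Bool)) : Prop :=
  ∀ (v : Fin n) (a b : Fin (2 * n)), a ≠ b → w a = v → w b = v →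
    (t v = Transition.follow →
      τ (a - pos1 hn, true) = (a, true) ∧ τ (b - pos1 hn, true) = (b, true) ∧
      τ (a, false) = (a - pos1 hn, false) ∧ τ (b, false) = (b - pos1 hn, false)) ∧
    (t v = Transition.cross →
      τ (a - pos1 hn, true) = (b, true) ∧ τ (b - pos1 hn, true) = (a, true) ∧
      τ (a, false) = (b - pos1 hn, false) ∧ τ (b, false) = (a - pos1 hn, false)) ∧
    (t v = Transition.reverse →
      τ (a - pos1 hn, true) = (b - pos1 hn, false) ∧ τ (b - pos1 hn, true) = (a - pos1 hn, false) ∧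
      τ (a, false) = (b, true) ∧ τ (b, false) = (a, true))

/-! ### Orbits of a permutation reversed by a free involution -/

section Reversal

variable {α : Type*} {τ : Equiv.Perm α} {r : α → α}

lemma pow_reverse_pow (h : ∀ d, τ (r (τ d)) = r d) (m : ℕ) (d : α) :
    (τ ^ m) (r ((τ ^ m) d)) = r d := by
  induction m generalizing d with
  | zero => simp
  | succ m ih =>
    have h1 : (τ ^ (m + 1)) d = τ ((τ ^ m) d) := by rw [pow_succ', Equiv.Perm.mul_apply]
    rw [h1, pow_succ, Equiv.Perm.mul_apply, h, ih]

/-- If `r` conjugates `τ` to its inverse, and neither `r` nor `τ⁻¹ r` fixes a point, then no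
orbit of `τ` contains both `d` and `r d`: the midpoint of a `τ`-path from `d` to `r d` would be
fixed by `r` or by `τ⁻¹ r`, according to the parity of its length. -/
lemma not_sameCycle_reverse [Finite α] (h : ∀ d, τ (r (τ d)) = r d) (h1 : ∀ d, r d ≠ d)
    (h2 : ∀ d, τ d ≠ r d) (d : α) : ¬ τ.SameCycle d (r d) := by
  intro hs
  obtain ⟨k, -, hk⟩ := hs.exists_pow_eq'
  obtain ⟨m, rfl | rfl⟩ := Nat.even_or_odd' k
  · rw [two_mul, pow_add, Equiv.Perm.mul_apply, ← pow_reverse_pow h m d] at hk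
    exact h1 _ ((τ ^ m).injective hk).symm
  · have e : 2 * m + 1 = m + (1 + m) := by ring
    rw [e, pow_add, pow_add, Equiv.Perm.mul_apply, Equiv.Perm.mul_apply, pow_one,
      ← pow_reverse_pow h m d] at hk
    exact h2 _ ((τ ^ m).injective hk)

lemma sameCycle_reverse [Finite α] (h : ∀ d, τ (r (τ d)) = r d) {d e : α}
    (hs : τ.SameCycle d e) : τ.SameCycle (r d) (r e) := by
  obtain ⟨k, -, rfl⟩ := hs.exists_pow_eq'
  refine Equiv.Perm.SameCycle.symm ⟨k, ?_⟩
  rw [zpow_natCast]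
  exact pow_reverse_pow h k d

end Reversal

/-! ### Circuits as classes of edges -/

/-- Reversal of a dart. -/
def dartRev {E : Type*} (d : E × Bool) : E × Bool := (d.1, !d.2)

section Circuits

variable {E : Type*} [Finite E] {τ : Equiv.Perm (E × Bool)}

/-- Two edges lie on the same circuit when some dart of one and some dart of the other lie in the
same orbit of the dart permutation `τ`; by reversal, the first dart may be taken to be positive. -/
def circuitSetoid (τ : Equiv.Perm (E × Bool)) (h : ∀ d, τ (dartRev (τ d)) = dartRev d) :
    Setoid E where
  r p q := ∃ ε, τ.SameCycle (p, true) (q, ε)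
  iseqv := by
    refine ⟨fun p => ⟨true, .refl _ _⟩, ?_, ?_⟩
    · rintro p q ⟨ε, hε⟩
      cases ε
      · exact ⟨false, (sameCycle_reverse h hε).symm⟩
      · exact ⟨true, hε.symm⟩
    · rintro p q s ⟨ε, hε⟩ ⟨δ, hδ⟩
      cases ε
      · exact ⟨!δ, hε.trans (sameCycle_reverse h hδ)⟩
      · exact ⟨δ, hε.trans hδ⟩

/-- Every circuit carries exactly two orbits of darts, one for each direction. -/
lemma orbitCount_eq_two_mul (h : ∀ d, τ (dartRev (τ d)) = dartRev d)
    (h2 : ∀ d, τ d ≠ dartRev d) :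
    orbitCount τ = 2 * Nat.card (Quotient (circuitSetoid τ h)) := by
  have hfree := not_sameCycle_reverse (r := dartRev) h
    (fun d hd => by simpa [dartRev] using congrArg Prod.snd hd) h2
  let F : Quotient (circuitSetoid τ h) × Bool → Quotient (sameCycleSetoid τ) :=
    fun x => Quotient.mk _ (x.1.out, x.2)
  have hF : Function.Bijective F := by
    constructor
    · rintro ⟨c, ε⟩ ⟨c', ε'⟩ hc
      have hs : τ.SameCycle (c.out, ε) (c'.out, ε') := Quotient.exact hc
      have hcc : c = c' := by
        rw [← Quotient.out_equiv_out]
        cases ε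
        · exact ⟨!ε', sameCycle_reverse h hs⟩
        · exact ⟨ε', hs⟩
      subst hcc
      by_cases he : ε = ε'
      · rw [he]
      · have : ε' = !ε := by cases ε <;> cases ε' <;> simp_all
        subst this
        exact (hfree _ hs).elim
    · intro o
      induction o using Quotient.inductionOn with
      | h d =>
        obtain ⟨p, δ⟩ := d
        obtain ⟨ε, hε⟩ := Quotient.mk_out (s := circuitSetoid τ h) p
        cases hδ : (ε == δ)
        · have : δ = !ε := by cases ε <;> cases δ <;> simp_all
          subst this
          exact ⟨(Quotient.mk _ p, false), Quotient.sound (sameCycle_reverse h hε)⟩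
        · have : δ = ε := by cases ε <;> cases δ <;> simp_all
          subst this
          exact ⟨(Quotient.mk _ p, true), Quotient.sound hε⟩
  unfold orbitCount
  rw [← Nat.card_eq_of_bijective F hF, Nat.card_prod]
  simp [mul_comm]

lemma circuit_invariant (h : ∀ d, τ (dartRev (τ d)) = dartRev d) {β : Type*} {f : E → β}
    (hf : ∀ d, f (τ d).1 = f d.1) {p q : E} (hpq : (circuitSetoid τ h).r p q) : f p = f q := by
  obtain ⟨ε, hε⟩ := hpq
  obtain ⟨k, -, hk⟩ := hε.exists_pow_eq'
  have key : ∀ (k : ℕ) (d : E × Bool), f ((τ ^ k) d).1 = f d.1 := by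
    intro k
    induction k with
    | zero => simp
    | succ k ih => intro d; rw [pow_succ', Equiv.Perm.mul_apply, hf, ih]
  have := key k (p, true)
  rw [hk] at this
  exact this.symm

lemma circuit_step (h : ∀ d, τ (dartRev (τ d)) = dartRev d) (d : E × Bool) :
    (circuitSetoid τ h).r (τ d).1 d.1 := by
  have hs : τ.SameCycle (τ d) d := (Equiv.Perm.sameCycle_apply_left).2 (.refl _ _)
  cases hd : (τ d).2
  · refine ⟨!d.2, ?_⟩
    have := sameCycle_reverse h hs
    simpa [dartRev, hd] using this
  · refine ⟨d.2, ?_⟩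
    have e : τ d = ((τ d).1, true) := by rw [← hd]
    rw [← e]
    exact hs

end Circuits

/-! ### The word -/

section Word

variable {n : ℕ} {hn : 0 < n} {w : Fin (2 * n) → Fin n}

lemma occurrences (hw : DoubleOccurrence w) (v : Fin n) :
    ∃ a b : Fin (2 * n), a < b ∧ w a = v ∧ w b = v ∧ ∀ p, w p = v → p = a ∨ p = b := by
  obtain ⟨a, b, hab, hs⟩ := Finset.card_eq_two.1 (hw v)
  have hm : ∀ p, w p = v ↔ p = a ∨ p = b := fun p => by
    have := Finset.ext_iff.1 hs p
    simpa using this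
  rcases lt_or_gt_of_ne hab with h | h
  · exact ⟨a, b, h, (hm a).2 (.inl rfl), (hm b).2 (.inr rfl), fun p hp => (hm p).1 hp⟩
  · exact ⟨b, a, h, (hm b).2 (.inr rfl), (hm a).2 (.inl rfl), fun p hp => ((hm p).1 hp).symm⟩

lemma exists_partner (hw : DoubleOccurrence w) (p : Fin (2 * n)) : ∃ q, p ≠ q ∧ w q = w p := by
  obtain ⟨a, b, hab, ha, hb, hp⟩ := occurrences hw (w p)
  rcases hp p rfl with h | h
  · exact ⟨b, h ▸ hab.ne, hb⟩
  · exact ⟨a, h ▸ hab.ne', ha⟩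

lemma sub_pos1_val (p : Fin (2 * n)) :
    (p - pos1 hn).val = if p.val = 0 then 2 * n - 1 else p.val - 1 := by
  have := p.2
  rw [Fin.sub_def]
  simp only [pos1]
  split_ifs with h
  · rw [h, Nat.mod_eq_of_lt] <;> omega
  · rw [show 2 * n - 1 + p.val = (p.val - 1) + 2 * n by omega, Nat.add_mod_right,
      Nat.mod_eq_of_lt (by omega)]

lemma sub_pos1_surjective (p : Fin (2 * n)) : ∃ q, q - pos1 hn = p := by
  have := p.2
  by_cases h : p.val + 1 < 2 * n
  · exact ⟨⟨p.val + 1, h⟩, Fin.ext (by rw [sub_pos1_val]; simp)⟩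
  · exact ⟨⟨0, by omega⟩, Fin.ext (by rw [sub_pos1_val]; simp; omega)⟩

lemma sub_pos1_injective {p q : Fin (2 * n)} (h : p - pos1 hn = q - pos1 hn) : p = q := by
  have h1 := congrArg Fin.val h
  rw [sub_pos1_val, sub_pos1_val] at h1
  have := p.2
  have := q.2
  apply Fin.ext
  split_ifs at h1 <;> omega

/-- Any dart enters a vertex at some position `a`, either as `(a - 1, +)` or as `(a, -)`. -/
lemma dart_cases (hn : 0 < n) (d : Fin (2 * n) × Bool) :
    ∃ a, d = (a - pos1 hn, true) ∨ d = (a, false) := by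
  obtain ⟨p, ε⟩ := d
  cases ε
  · exact ⟨p, .inr rfl⟩
  · obtain ⟨q, rfl⟩ := sub_pos1_surjective (hn := hn) p
    exact ⟨q, .inl rfl⟩

variable {t : Fin n → Transition} {τ : Equiv.Perm (Fin (2 * n) × Bool)}

lemma IsDartPerm.reverse_eq (hw : DoubleOccurrence w) (hτ : IsDartPerm hn w t τ)
    (d : Fin (2 * n) × Bool) : τ (dartRev (τ d)) = dartRev d := by
  obtain ⟨a, ha⟩ := dart_cases hn d
  obtain ⟨b, hab, hb⟩ := exists_partner hw a
  obtain ⟨hf, hc, hr⟩ := hτ (w a) a b hab rfl hb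
  cases ht : t (w a)
  · obtain ⟨h1, h2, h3, h4⟩ := hf ht
    rcases ha with rfl | rfl <;> simp [dartRev, *]
  · obtain ⟨h1, h2, h3, h4⟩ := hc ht
    rcases ha with rfl | rfl <;> simp [dartRev, *]
  · obtain ⟨h1, h2, h3, h4⟩ := hr ht
    rcases ha with rfl | rfl <;> simp [dartRev, *]

lemma IsDartPerm.ne_reverse (hw : DoubleOccurrence w) (hτ : IsDartPerm hn w t τ)
    (d : Fin (2 * n) × Bool) : τ d ≠ dartRev d := by
  obtain ⟨a, ha⟩ := dart_cases hn d
  obtain ⟨b, hab, hb⟩ := exists_partner hw a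
  obtain ⟨hf, hc, hr⟩ := hτ (w a) a b hab rfl hb
  cases ht : t (w a)
  · obtain ⟨h1, h2, h3, h4⟩ := hf ht
    rcases ha with rfl | rfl <;> simp [dartRev, *]
  · obtain ⟨h1, h2, h3, h4⟩ := hc ht
    rcases ha with rfl | rfl <;> simp [dartRev, *]
  · obtain ⟨h1, h2, h3, h4⟩ := hr ht
    rcases ha with rfl | rfl
    · intro he
      rw [h1] at he
      exact hab (sub_pos1_injective (congrArg Prod.fst he)).symm
    · intro he
      rw [h3] at he
      exact hab (congrArg Prod.fst he).symm

/-- Between the two occurrences of `v`, an interlaced vertex occurs once and any other vertex an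
even number of times, so summing `x ∘ w` there gives the `v`-entry of `I(w) x` modulo 2. -/
lemma sum_between (hw : DoubleOccurrence w) (x : Fin n → ZMod 2) {v : Fin n}
    {a b : Fin (2 * n)} (hab : a < b) (ha : w a = v) (hb : w b = v)
    (hv : ∀ p, w p = v → p = a ∨ p = b) :
    ∑ q with a < q ∧ q < b, x (w q) = ∑ u, interlaceMatrix w v u * x u := by
  rw [← Finset.sum_fiberwise_of_maps_to (t := Finset.univ) (g := w) (fun _ _ => Finset.mem_univ _)]
  refine Finset.sum_congr rfl fun u _ => ?_
  rw [Finset.filter_filter, Finset.sum_congr rfl (g := fun _ => x u)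
    (fun q hq => by rw [(Finset.mem_filter.1 hq).2.2]), Finset.sum_const, nsmul_eq_mul]
  congr 1
  simp only [interlaceMatrix, Matrix.of_apply, and_assoc]
  have hle : (Finset.univ.filter fun r => a < r ∧ r < b ∧ w r = u).card ≤ 2 := by
    refine le_of_le_of_eq (Finset.card_le_card fun r hr => ?_) (hw u)
    simp only [Finset.mem_filter, Finset.mem_univ, true_and] at hr ⊢
    exact hr.2.2
  split_ifs with hI
  · rw [hI.2 a b hab ha hb]; simp
  · have hne : u ≠ v → (Finset.univ.filter fun r => a < r ∧ r < b ∧ w r = u).card ≠ 1 := by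
      intro huv h1
      refine hI ⟨huv.symm, fun p q hpq hp hq => ?_⟩
      have : p = a ∧ q = b := by
        rcases hv p hp with rfl | rfl <;> rcases hv q hq with rfl | rfl
        · exact (lt_irrefl _ hpq).elim
        · exact ⟨rfl, rfl⟩
        · exact (lt_asymm hpq hab).elim
        · exact (lt_irrefl _ hpq).elim
      rw [this.1, this.2, h1]
    by_cases huv : u = v
    · have : (Finset.univ.filter fun r => a < r ∧ r < b ∧ w r = u) = ∅ := by
        refine Finset.filter_eq_empty_iff.2 fun r _ hr => ?_
        rcases hv r (huv ▸ hr.2.2) with rfl | rfl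
        · exact lt_irrefl _ hr.1
        · exact lt_irrefl _ hr.2.1
      rw [this]; simp
    · have h3 := hne huv
      generalize (Finset.univ.filter fun r => a < r ∧ r < b ∧ w r = u).card = c at *
      interval_cases c
      · simp
      · exact (h3 rfl).elim
      · decide

lemma telescope {f : Fin (2 * n) → ZMod 2} {x : Fin n → ZMod 2}
    (hf : ∀ p, f p + f (p - pos1 hn) = x (w p)) (a b : Fin (2 * n)) (hab : a ≤ b) :
    f a + f b = ∑ q with a < q ∧ q ≤ b, x (w q) := by
  obtain ⟨b, hb⟩ := b
  induction b with
  | zero =>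
    have : a = ⟨0, hb⟩ := Fin.ext (by simpa [Fin.le_def] using hab)
    subst this
    rw [Finset.filter_false_of_mem]
    · simpa using CharTwo.add_self_eq_zero _
    · intro q _ hq; exact absurd hq.1 (not_lt.2 hq.2)
  | succ b ih =>
    rcases hab.eq_or_lt with rfl | hlt
    · rw [Finset.filter_false_of_mem]
      · simpa using CharTwo.add_self_eq_zero _
      · intro q _ hq; exact absurd hq.1 (not_lt.2 hq.2)
    · have hb' : b < 2 * n := by omega
      have hle : a ≤ ⟨b, hb'⟩ := by
        simp only [Fin.lt_def, Fin.le_def] at *; omega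
      have hset : (Finset.univ.filter fun q : Fin (2 * n) => a < q ∧ q ≤ ⟨b + 1, hb⟩) =
          insert ⟨b + 1, hb⟩ (Finset.univ.filter fun q => a < q ∧ q ≤ ⟨b, hb'⟩) := by
        ext q
        simp only [Finset.mem_filter, Finset.mem_univ, true_and, Finset.mem_insert, Fin.lt_def,
          Fin.le_def, Fin.ext_iff] at *
        omega
      rw [hset, Finset.sum_insert (by simp [Fin.le_def]), ← ih hb' hle, ← hf]
      have : (⟨b + 1, hb⟩ : Fin (2 * n)) - pos1 hn = ⟨b, hb'⟩ :=
        Fin.ext (by rw [sub_pos1_val]; simp)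
      rw [this]
      generalize f ⟨b + 1, hb⟩ = u
      generalize f ⟨b, hb'⟩ = u'
      generalize f a = u''
      revert u u' u''
      decide

/-- Adding up the jumps of an edge labelling from one occurrence of a vertex to the other one. -/
lemma label_compare (hw : DoubleOccurrence w) {f : Fin (2 * n) → ZMod 2} {x : Fin n → ZMod 2}
    (hf : ∀ p, f p + f (p - pos1 hn) = x (w p)) {a b : Fin (2 * n)} (hab : a ≠ b)
    (h : w b = w a) :
    f a + f b = x (w a) + ∑ u, interlaceMatrix w (w a) u * x u := by
  obtain ⟨a', b', hab', ha', hb', hp⟩ := occurrences hw (w a)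
  have key : f a' + f b' = x (w a) + ∑ u, interlaceMatrix w (w a) u * x u := by
    rw [telescope hf a' b' hab'.le, ← sum_between hw x hab' ha' hb' hp]
    have hset : (Finset.univ.filter fun q => a' < q ∧ q ≤ b') =
        insert b' (Finset.univ.filter fun q => a' < q ∧ q < b') := by
      ext q
      simp only [Finset.mem_filter, Finset.mem_univ, true_and, Finset.mem_insert, Fin.lt_def,
        Fin.le_def, Fin.ext_iff] at *
      omega
    rw [hset, Finset.sum_insert (by simp), hb']
  rcases hp a rfl with h1 | h1 <;> rcases hp b h with h2 | h2
  · exact (hab (h1.trans h2.symm)).elim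
  · rw [← key, h1, h2]
  · rw [← key, h1, h2, add_comm]
  · exact (hab (h1.trans h2.symm)).elim

/-- The labelling of edges obtained by summing `x` along the word closes up cyclically, as every
vertex is met twice. -/
lemma exists_label (hw : DoubleOccurrence w) (x : Fin n → ZMod 2) :
    ∃ f : Fin (2 * n) → ZMod 2, ∀ p, f p + f (p - pos1 hn) = x (w p) := by
  refine ⟨fun p => ∑ q with q ≤ p, x (w q), fun p => ?_⟩
  have hp2 := p.2
  by_cases hp : p.val = 0
  · have hval := sub_pos1_val (hn := hn) p
    rw [if_pos hp] at hval
    have hall : ∑ q with q ≤ p - pos1 hn, x (w q) = 0 := by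
      rw [Finset.filter_true_of_mem (by
        intro q _; rw [Fin.le_def, hval]; have := q.2; omega)]
      rw [← Finset.sum_fiberwise_of_maps_to (t := Finset.univ) (g := w)
        (fun _ _ => Finset.mem_univ _)]
      refine Finset.sum_eq_zero fun u _ => ?_
      rw [Finset.sum_congr rfl (g := fun _ => x u)
        (fun q hq => by rw [(Finset.mem_filter.1 hq).2]), Finset.sum_const, hw u]
      rw [two_nsmul, CharTwo.add_self_eq_zero]
    have hone : (Finset.univ.filter fun q => q ≤ p) = {p} := by
      ext q
      simp only [Finset.mem_filter, Finset.mem_univ, true_and, Finset.mem_singleton,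
        Fin.le_def, Fin.ext_iff]
      omega
    simp only [hall, hone, Finset.sum_singleton, add_zero]
  · have hval := sub_pos1_val (hn := hn) p
    rw [if_neg hp] at hval
    have hset : (Finset.univ.filter fun q => q ≤ p) =
        insert p (Finset.univ.filter fun q => q ≤ p - pos1 hn) := by
      ext q
      simp only [Finset.mem_filter, Finset.mem_univ, true_and, Finset.mem_insert,
        Fin.le_def, Fin.ext_iff, hval]
      omega
    simp only [hset]
    rw [Finset.sum_insert (by simp [Fin.le_def, hval]; omega), add_assoc,
      CharTwo.add_self_eq_zero, add_zero]

/-- The equation at `v` in the linear system attached to `t`: the coordinate vanishes at a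
`follow` vertex, and the row of `v` in the looped interlace matrix (loop at `reverse`, none at
`cross`) annihilates `x` otherwise. -/
def VertexEq (w : Fin (2 * n) → Fin n) (t : Fin n → Transition) (x : Fin n → ZMod 2)
    (v : Fin n) : Prop :=
  match t v with
  | .follow => x v = 0
  | .cross => ∑ u, interlaceMatrix w v u * x u = 0
  | .reverse => x v + ∑ u, interlaceMatrix w v u * x u = 0

/-- An edge labelling which is constant on circuits jumps by the same amount at both
occurrences of each vertex. -/
lemma jump_eq (hτ : IsDartPerm hn w t τ) {f : Fin (2 * n) → ZMod 2}
    (hf : ∀ d, f (τ d).1 = f d.1) {a b : Fin (2 * n)} (h : w b = w a) :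
    f a + f (a - pos1 hn) = f b + f (b - pos1 hn) := by
  by_cases hab : a = b
  · rw [hab]
  obtain ⟨hF, hC, hR⟩ := hτ (w a) a b hab rfl h
  have e1 := hf (a - pos1 hn, true)
  have e2 := hf (b - pos1 hn, true)
  have e3 := hf (a, false)
  cases ht : t (w a)
  · obtain ⟨h1, h2, h3, h4⟩ := hF ht
    rw [h1] at e1
    rw [h2] at e2
    simp only at e1 e2
    rw [e1, e2, CharTwo.add_self_eq_zero, CharTwo.add_self_eq_zero]
  · obtain ⟨h1, h2, h3, h4⟩ := hC ht
    rw [h1] at e1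
    rw [h2] at e2
    simp only at e1 e2
    rw [e1, e2, add_comm]
  · obtain ⟨h1, h2, h3, h4⟩ := hR ht
    rw [h1] at e1
    rw [h3] at e3
    simp only at e1 e3
    rw [e1, e3]

/-- A labelling with jumps `x` is constant on circuits exactly when `x` solves the linear
system attached to `t`. -/
lemma invariant_iff (hw : DoubleOccurrence w) (hτ : IsDartPerm hn w t τ)
    {f : Fin (2 * n) → ZMod 2} {x : Fin n → ZMod 2}
    (hf : ∀ p, f p + f (p - pos1 hn) = x (w p)) :
    (∀ d, f (τ d).1 = f d.1) ↔ ∀ v, VertexEq w t x v := by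
  -- `p, r` are the labels after and before one occurrence of a vertex, `q, s` those at the other,
  -- `y` is the jump there and `z` the entry of `I(w) x`.
  have alg1 : ∀ p q r s y z : ZMod 2, p + r = y → q + s = y → p + q = y + z →
      (r = q ↔ z = 0) ∧ (p = q ↔ y + z = 0) ∧ (r = s ↔ y + z = 0) ∧ (s = p ↔ z = 0) ∧
      (p = r ↔ y = 0) := by
    have core : ∀ p q y : ZMod 2, (p + y = q ↔ p + q + y = 0) ∧ (p = q ↔ y + (p + q + y) = 0) ∧
        (p + y = q + y ↔ y + (p + q + y) = 0) ∧ (q + y = p ↔ p + q + y = 0) ∧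
        (p = p + y ↔ y = 0) := by decide
    have solve : ∀ p r y : ZMod 2, p + r = y → r = p + y := by decide
    intro p q r s y z h1 h2 h3
    have hz : z = p + q + y := by rw [solve _ _ _ h3.symm]; ring
    rw [solve _ _ _ h1, solve _ _ _ h2, hz]
    exact core p q y
  have main : ∀ a b, a ≠ b → w b = w a → (VertexEq w t x (w a) ↔
      f (τ (a - pos1 hn, true)).1 = f (a - pos1 hn)) ∧
      (VertexEq w t x (w a) ↔ f (τ (a, false)).1 = f a) := by
    intro a b hab h
    obtain ⟨hF, hC, hR⟩ := hτ (w a) a b hab rfl h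
    obtain ⟨k1, k2, k3, k4, k5⟩ := alg1 _ _ _ _ _ _ (hf a) (h ▸ hf b) (label_compare hw hf hab h)
    cases ht : t (w a)
    · obtain ⟨h1, h2, h3, h4⟩ := hF ht
      simp only [VertexEq, ht, h1, h3]
      exact ⟨k5.symm, k5.symm.trans eq_comm⟩
    · obtain ⟨h1, h2, h3, h4⟩ := hC ht
      simp only [VertexEq, ht, h1, h3]
      exact ⟨k1.symm.trans eq_comm, k4.symm⟩
    · obtain ⟨h1, h2, h3, h4⟩ := hR ht
      simp only [VertexEq, ht, h1, h3]
      exact ⟨k3.symm.trans eq_comm, k2.symm.trans eq_comm⟩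
  constructor
  · intro h v
    obtain ⟨a, b, hab, ha, hb, -⟩ := occurrences hw v
    rw [← ha]
    exact (main a b hab.ne (hb.trans ha.symm)).2.2 (h _)
  · intro h d
    obtain ⟨a, ha⟩ := dart_cases hn d
    obtain ⟨b, hab, hb⟩ := exists_partner hw a
    rcases ha with rfl | rfl
    · exact (main a b hab hb).1.1 (h _)
    · exact (main a b hab hb).2.1 (h _)

/-- A labelling without jumps is constant. -/
lemma label_const {f : Fin (2 * n) → ZMod 2}
    (hf : ∀ p, f p = f (p - pos1 hn)) (a b : Fin (2 * n)) : f a = f b := by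
  have key : ∀ a b : Fin (2 * n), a ≤ b → f a = f b := fun a b hab => by
    have := telescope (w := fun _ => (⟨0, hn⟩ : Fin n)) (x := 0) (hn := hn) (f := f)
      (fun p => by rw [← hf p]; simpa using CharTwo.add_self_eq_zero _) a b hab
    simpa [CharTwo.add_eq_zero] using this
  rcases le_total a b with h | h
  · exact key a b h
  · exact (key b a h).symm

/-- The solution space of the linear system attached to `t`. -/
def solutions (w : Fin (2 * n) → Fin n) (t : Fin n → Transition) :
    Submodule (ZMod 2) (Fin n → ZMod 2) where
  carrier := {x | ∀ v, VertexEq w t x v}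
  zero_mem' v := by
    unfold VertexEq
    cases t v <;> simp
  add_mem' {x y} hx hy v := by
    have hx := hx v
    have hy := hy v
    unfold VertexEq at *
    cases ht : t v <;> simp only [ht, Pi.add_apply, mul_add, Finset.sum_add_distrib] at *
    · rw [hx, hy, add_zero]
    · rw [hx, hy, add_zero]
    · rw [add_add_add_comm, hx, hy, add_zero]
  smul_mem' c x hx v := by
    have hx := hx v
    unfold VertexEq at *
    cases ht : t v <;>
      simp only [ht, Pi.smul_apply, smul_eq_mul, mul_left_comm _ c, ← Finset.mul_sum,
        ← mul_add] at * <;> rw [hx, mul_zero]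

/-- Taking jumps is a linear map from labellings of circuits onto the solution space, whose
kernel is the line of constant labellings. -/
lemma card_circuits (hw : DoubleOccurrence w) (hτ : IsDartPerm hn w t τ) :
    Nat.card (Quotient (circuitSetoid τ (hτ.reverse_eq hw))) =
      Module.finrank (ZMod 2) (solutions w t) + 1 := by
  set s := circuitSetoid τ (hτ.reverse_eq hw) with hs
  choose a ha using fun v => (occurrences hw v).imp fun a h => h.choose_spec.2.1
  let φ : (Quotient s → ZMod 2) →ₗ[ZMod 2] (Fin n → ZMod 2) :=
    { toFun g v := g (Quotient.mk s (a v)) + g (Quotient.mk s (a v - pos1 hn))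
      map_add' g g' := by ext v; simp only [Pi.add_apply]; ring
      map_smul' c g := by
        ext v; simp only [Pi.smul_apply, smul_eq_mul, RingHom.id_apply]; ring }
  have hinv : ∀ (g : Quotient s → ZMod 2) (d : Fin (2 * n) × Bool),
      g (Quotient.mk s (τ d).1) = g (Quotient.mk s d.1) := fun g d =>
    congrArg g (Quotient.sound (circuit_step (hτ.reverse_eq hw) d))
  have hjump : ∀ (g : Quotient s → ZMod 2) (p : Fin (2 * n)),
      g (Quotient.mk s p) + g (Quotient.mk s (p - pos1 hn)) = φ g (w p) := fun g p =>
    jump_eq hτ (f := fun p => g (Quotient.mk s p)) (hinv g) (ha (w p))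
  have hrange : LinearMap.range φ = solutions w t := by
    ext x
    constructor
    · rintro ⟨g, rfl⟩
      exact (invariant_iff hw hτ (f := fun p => g (Quotient.mk s p)) (hjump g)).1 (hinv g)
    · intro hx
      obtain ⟨f, hf⟩ := exists_label (hn := hn) hw x
      have hfi := (invariant_iff hw hτ hf).2 hx
      refine ⟨Quotient.lift f fun p q h => circuit_invariant (hτ.reverse_eq hw) hfi h, ?_⟩
      ext v
      have := hf (a v)
      rw [ha] at this
      exact this
  have hker : LinearMap.ker φ = Submodule.span (ZMod 2) {fun _ => 1} := by
    ext g
    rw [LinearMap.mem_ker, Submodule.mem_span_singleton]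
    constructor
    · intro hg
      have hc := label_const (hn := hn) (f := fun p => g (Quotient.mk s p)) fun p => by
        have := hjump g p
        rw [hg] at this
        exact CharTwo.add_eq_zero.1 this
      refine ⟨g (Quotient.mk s ⟨0, by omega⟩), funext fun c => ?_⟩
      induction c using Quotient.inductionOn with
      | h p => simpa using hc _ p
    · rintro ⟨c, rfl⟩
      ext v
      exact CharTwo.add_self_eq_zero (c * 1)
  have hfin : Module.finrank (ZMod 2) (LinearMap.ker φ) = 1 := by
    rw [hker]
    refine finrank_span_singleton fun h => ?_
    have := congrFun h (Quotient.mk s ⟨0, by omega⟩)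
    exact one_ne_zero this
  have := LinearMap.finrank_range_add_finrank_ker φ
  rw [hrange, hfin, Module.finrank_fintype_fun_eq_card, ← Nat.card_eq_fintype_card] at this
  exact this.symm

end Word

/-! ### The circuit-nullity formula -/

lemma nullity_eq_finrank_ker {ι : Type*} [Fintype ι] (M : Matrix ι ι (ZMod 2)) :
    nullity M = Module.finrank (ZMod 2) (LinearMap.ker M.mulVecLin) := by
  have := LinearMap.finrank_range_add_finrank_ker M.mulVecLin
  rw [Module.finrank_fintype_fun_eq_card] at this
  rw [nullity, Matrix.rank]
  omega

/-- Extension by zero identifies the null space of `A_S` with the solution space of the linear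
system attached to `t_S`. -/
lemma nullity_submatrix {n : ℕ} (w : Fin (2 * n) → Fin n) (ℓ : Fin n → ZMod 2)
    (S : Finset (Fin n)) :
    nullity ((interlaceMatrix w + Matrix.diagonal ℓ).submatrix
      (fun i : {x // x ∈ S} => (i : Fin n)) (fun j : {x // x ∈ S} => (j : Fin n))) =
    Module.finrank (ZMod 2) (solutions w (fun v => if v ∈ S then
      (if ℓ v = 1 then Transition.reverse else Transition.cross) else Transition.follow)) := by
  set t : Fin n → Transition := fun v => if v ∈ S then
      (if ℓ v = 1 then Transition.reverse else Transition.cross) else Transition.follow with ht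
  have heq : ∀ x v, VertexEq w t x v ↔
      if v ∈ S then ℓ v * x v + ∑ u, interlaceMatrix w v u * x u = 0 else x v = 0 := by
    intro x v
    unfold VertexEq
    by_cases hv : v ∈ S
    · by_cases hl : ℓ v = 1
      · simp [ht, hv, hl]
      · have h0 : ℓ v = 0 := by
          generalize ℓ v = c at hl
          revert c
          decide
        simp [ht, hv, h0]
    · simp [ht, hv]
  have hrow : ∀ (x : Fin n → ZMod 2), (∀ v, v ∉ S → x v = 0) → ∀ i : {x // x ∈ S},
      ((interlaceMatrix w + Matrix.diagonal ℓ).submatrix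
        (fun i : {x // x ∈ S} => (i : Fin n)) (fun j : {x // x ∈ S} => (j : Fin n))).mulVec
        (fun j => x j) i = ℓ i * x i + ∑ u, interlaceMatrix w i u * x u := by
    intro x hx i
    have h1 : ∑ j : {x // x ∈ S}, (interlaceMatrix w + Matrix.diagonal ℓ) i j * x j =
        ∑ u, (interlaceMatrix w + Matrix.diagonal ℓ) i u * x u := by
      rw [Finset.sum_coe_sort S (fun u => (interlaceMatrix w + Matrix.diagonal ℓ) i u * x u)]
      exact Finset.sum_subset (Finset.subset_univ S) fun u _ hu => by rw [hx u hu, mul_zero]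
    simp only [Matrix.mulVec, dotProduct, Matrix.submatrix_apply]
    rw [h1]
    simp only [Matrix.add_apply, add_mul, Finset.sum_add_distrib]
    rw [add_comm]
    congr 1
    rw [Finset.sum_eq_single (i : Fin n)]
    · rw [Matrix.diagonal_apply_eq]
    · intro u _ hu
      rw [Matrix.diagonal_apply_ne _ hu.symm, zero_mul]
    · simp
  rw [nullity_eq_finrank_ker]
  symm
  let ρ : (Fin n → ZMod 2) →ₗ[ZMod 2] ({x // x ∈ S} → ZMod 2) :=
    LinearMap.funLeft (ZMod 2) (ZMod 2) (fun i => (i : Fin n))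
  have hoff : ∀ x ∈ solutions w t, ∀ v, v ∉ S → x v = 0 := fun x hx v hv => by
    have := (heq x v).1 (hx v)
    rwa [if_neg hv] at this
  refine LinearEquiv.finrank_eq (LinearEquiv.ofBijective
    ((ρ.domRestrict (solutions w t)).codRestrict _ ?_) ⟨?_, ?_⟩)
  · rintro ⟨x, hx⟩
    rw [LinearMap.mem_ker]
    ext i
    refine (hrow x (hoff x hx) i).trans ?_
    have := (heq x i).1 (hx i)
    rwa [if_pos i.2] at this
  · rintro ⟨x, hx⟩ ⟨y, hy⟩ hxy
    have hxy' : ρ x = ρ y := congrArg Subtype.val hxy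
    refine Subtype.ext (funext fun v => ?_)
    by_cases hv : v ∈ S
    · exact congrFun hxy' ⟨v, hv⟩
    · exact (hoff x hx v hv).trans (hoff y hy v hv).symm
  · rintro ⟨z, hz⟩
    let x : Fin n → ZMod 2 := fun v => if h : v ∈ S then z ⟨v, h⟩ else 0
    have hxz : (fun j : {x // x ∈ S} => x j) = z := funext fun j => by simp [x]
    have hx0 : ∀ v, v ∉ S → x v = 0 := fun v hv => by simp [x, hv]
    refine ⟨⟨x, fun v => (heq x v).2 ?_⟩, Subtype.ext hxz⟩
    split_ifs with hv
    · rw [← hrow x hx0 ⟨v, hv⟩, hxz]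
      exact congrFun hz ⟨v, hv⟩
    · exact hx0 v hv

/-- **Two-variable interlace polynomial as a circuit-partition generating function.**
Let `w` be a double occurrence word on `n ≥ 1` vertices, `ℓ` a loop assignment and
`A = I(w) + diag(ℓ)`. For `S ⊆ {1,…,n}` let `t_S` be the transition assignment which
follows outside `S`, reverses at looped vertices of `S` and crosses at unlooped vertices
of `S`, and let `τ t_S` be the corresponding dart permutation, so that the circuit
partition `P_{t_S}` has `|P_{t_S}| = (number of orbits of τ t_S)/2`. Then, in `ℤ[x,y]`
(realised as `MvPolynomial (Fin 2) ℤ` with `x = X 0` and `y = X 1`),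
`Σ_S (x−1)^(|S|−ν(A_S)) (y−1)^(ν(A_S)) = Σ_S (x−1)^(|S|−|P_{t_S}|+1) (y−1)^(|P_{t_S}|−1)`;
the left-hand side is the two-variable interlace polynomial `q(H)` of the looped graph
`H` with adjacency matrix `A`. -/
theorem two_variable_interlace_polynomial_circuit_partitions {n : ℕ} (hn : 0 < n)
    (w : Fin (2 * n) → Fin n) (hw : DoubleOccurrence w) (ℓ : Fin n → ZMod 2)
    (τ : (Fin n → Transition) → Equiv.Perm (Fin (2 * n) × Bool))
    (hτ : ∀ t : Fin n → Transition, IsDartPerm hn w t (τ t)) :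
    ∑ S : Finset (Fin n),
        (MvPolynomial.X 0 - 1 : MvPolynomial (Fin 2) ℤ) ^
            (S.card - nullity ((interlaceMatrix w + Matrix.diagonal ℓ).submatrix
              (fun i : {x // x ∈ S} => (i : Fin n)) (fun j : {x // x ∈ S} => (j : Fin n)))) *
          (MvPolynomial.X 1 - 1 : MvPolynomial (Fin 2) ℤ) ^
            nullity ((interlaceMatrix w + Matrix.diagonal ℓ).submatrix
              (fun i : {x // x ∈ S} => (i : Fin n)) (fun j : {x // x ∈ S} => (j : Fin n))) =
      ∑ S : Finset (Fin n),
        (MvPolynomial.X 0 - 1 : MvPolynomial (Fin 2) ℤ) ^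
            (S.card + 1 - orbitCount (τ (fun v => if v ∈ S then
                (if ℓ v = 1 then Transition.reverse else Transition.cross)
              else Transition.follow)) / 2) *
          (MvPolynomial.X 1 - 1 : MvPolynomial (Fin 2) ℤ) ^
            (orbitCount (τ (fun v => if v ∈ S then
                (if ℓ v = 1 then Transition.reverse else Transition.cross)
              else Transition.follow)) / 2 - 1) := by
  refine Finset.sum_congr rfl fun S _ => ?_
  have h := hτ (fun v => if v ∈ S then
    (if ℓ v = 1 then Transition.reverse else Transition.cross) else Transition.follow)
  rw [orbitCount_eq_two_mul (h.reverse_eq hw) (h.ne_reverse hw), card_circuits hw h,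
    ← nullity_submatrix, Nat.mul_div_cancel_left _ two_pos, Nat.add_sub_cancel,
    Nat.add_sub_add_right]
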